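/- For any step of the nonsmooth Newmark scheme with γ = 2β, one has E(q_{k+1},v_{k+1}) − E(q_k,v_k) − W_ext − W_damp = (1/2 − γ)‖q_{k+1}−q_k‖²_K + U_{k+1/2}ᵀ P_{k+1}; consequently, if moreover γ ≥ 1/2 and the local velocities and impulse satisfy the discrete contact conditions, the scheme always dissipates the mechanical energy: E(q_{k+1},v_{k+1}) − E(q_k,v_k) ≤ W_ext + W_damp. -/

import Mathlib

open Matrix

/-!
Over a time step the gain in a quadratic energy `x ↦ ½ xᵀ A x` with `A` symmetric is the power of
`A` times the mean state against the increment. For `γ = 2β` the two Newmark updates are tied by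
the midpoint relation `Δq = h (v_k + v_{k+1}) / 2`, which turns the kinetic gain into the work of
`M a_γ` over `Δq` plus the percussion work `U_{k+1/2}ᵀ P`. The potential gain is the work of
`K q_γ` over `Δq`, up to the defect `(1/2 - γ) ‖Δq‖²_K` between the `γ`-mean and the midpoint.
The `γ`-mean of the equations of motion then identifies the remaining work with `W_ext + W_damp`.

For contact, complementarity replaces the outgoing velocity by `-e U_k` wherever `P ≠ 0`, so each
percussion does the work `½ (1 - e) U_k P ≤ 0`.
-/

section GammaMean

variable {R V : Type*} [Ring R] [AddCommMonoid V] [Module R V]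

/-- The `γ`-weighted mean `x_{k,γ} = γ x_{k+1} + (1 - γ) x_k` of the values `x₀ = x_k` and
`x₁ = x_{k+1}` of a quantity at the two ends of a time step. -/
def gammaMean (γ : R) (x₀ x₁ : V) : V :=
  γ • x₁ + (1 - γ) • x₀

theorem gammaMean_add (γ : R) (x₀ x₁ y₀ y₁ : V) :
    gammaMean γ (x₀ + y₀) (x₁ + y₁) = gammaMean γ x₀ x₁ + gammaMean γ y₀ y₁ := by
  simp only [gammaMean, smul_add]
  abel

end GammaMean

section QuadraticEnergy

variable {R ι κ : Type*} [Fintype ι]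

theorem mulVec_gammaMean [CommRing R] (A : Matrix κ ι R) (γ : R) (x₀ x₁ : ι → R) :
    A *ᵥ gammaMean γ x₀ x₁ = gammaMean γ (A *ᵥ x₀) (A *ᵥ x₁) := by
  simp only [gammaMean, mulVec_add, mulVec_smul]

theorem dotProduct_mulVec_comm_of_isSymm [CommSemiring R] {A : Matrix ι ι R} (hA : A.IsSymm)
    (x y : ι → R) : x ⬝ᵥ A *ᵥ y = y ⬝ᵥ A *ᵥ x := by
  rw [← dotProduct_transpose_mulVec, hA.eq]

theorem dotProduct_mulVec_self_sub_self [CommRing R] {A : Matrix ι ι R} (hA : A.IsSymm)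
    (x₀ x₁ : ι → R) :
    x₁ ⬝ᵥ A *ᵥ x₁ - x₀ ⬝ᵥ A *ᵥ x₀ = (x₀ + x₁) ⬝ᵥ A *ᵥ (x₁ - x₀) := by
  simp only [mulVec_sub, dotProduct_sub, add_dotProduct]
  linear_combination dotProduct_mulVec_comm_of_isSymm hA x₁ x₀

theorem half_dotProduct_mulVec_self_sub_self [Field R] [NeZero (2 : R)] {A : Matrix ι ι R}
    (hA : A.IsSymm) (γ : R) (x₀ x₁ : ι → R) :
    1 / 2 * (x₁ ⬝ᵥ A *ᵥ x₁) - 1 / 2 * (x₀ ⬝ᵥ A *ᵥ x₀) =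
      (x₁ - x₀) ⬝ᵥ A *ᵥ gammaMean γ x₀ x₁
        + (1 / 2 - γ) * ((x₁ - x₀) ⬝ᵥ A *ᵥ (x₁ - x₀)) := by
  have midpoint_eq :
      (1 / 2 : R) • (x₀ + x₁) = gammaMean γ x₀ x₁ + (1 / 2 - γ) • (x₁ - x₀) := by
    have one_sub_eq : 1 - γ = 1 / 2 + (1 / 2 - γ) := by rw [← add_sub_assoc, add_halves]
    rw [gammaMean, one_sub_eq]
    module
  calc 1 / 2 * (x₁ ⬝ᵥ A *ᵥ x₁) - 1 / 2 * (x₀ ⬝ᵥ A *ᵥ x₀)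
      = 1 / 2 * ((x₀ + x₁) ⬝ᵥ A *ᵥ (x₁ - x₀)) := by
        rw [← mul_sub, dotProduct_mulVec_self_sub_self hA]
    _ = (x₁ - x₀) ⬝ᵥ A *ᵥ ((1 / 2 : R) • (x₀ + x₁)) := by
        rw [dotProduct_mulVec_comm_of_isSymm hA, mulVec_smul, dotProduct_smul, smul_eq_mul]
    _ = _ := by
        rw [midpoint_eq, mulVec_add, mulVec_smul, dotProduct_add, dotProduct_smul, smul_eq_mul]

end QuadraticEnergy

/-- The total mechanical energy `E(q, v) = ½ vᵀ M v + ½ qᵀ K q` of a system with mass matrix `M`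
and stiffness matrix `K`, at position `q` and velocity `v`. -/
def mechanicalEnergy {ι R : Type*} [Fintype ι] [Field R] (M K : Matrix ι ι R) (q v : ι → R) : R :=
  1 / 2 * (v ⬝ᵥ M *ᵥ v) + 1 / 2 * (q ⬝ᵥ K *ᵥ q)

/-- One step of the nonsmooth Newmark scheme with time step `h` and parameters `γ`, `β`. The
subscripts `₀` and `₁` stand for the times `k` and `k + 1`; `w` and `P` are the velocity jump
`w_{k+1}` and the percussion `P_{k+1}`, whose contact law is imposed separately. -/
structure NonsmoothNewmarkStep {ι κ R : Type*} [Fintype ι] [Fintype κ] [Field R]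
    (M K C : Matrix ι ι R) (G : Matrix ι κ R) (h γ β : R) where
  (q₀ q₁ v₀ v₁ a₀ a₁ w F₀ F₁ : ι → R)
  P : κ → R
  balance₀ : M *ᵥ a₀ + K *ᵥ q₀ + C *ᵥ v₀ = F₀
  balance₁ : M *ᵥ a₁ + K *ᵥ q₁ + C *ᵥ v₁ = F₁
  impulse : M *ᵥ w = G *ᵥ P
  velocity_update : v₁ = v₀ + (h * (1 - γ)) • a₀ + (h * γ) • a₁ + w
  position_update : q₁ = q₀ + h • v₀ + (h ^ 2 * (1 / 2 - β)) • a₀ + (h ^ 2 * β) • a₁ + (h / 2) • w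

namespace NonsmoothNewmarkStep

section Energy

variable {ι κ R : Type*} [Fintype ι] [Fintype κ] [Field R]
  {M K C : Matrix ι ι R} {G : Matrix ι κ R} {h γ β : R}

/-- The mechanical energy gained over the step, `E(q_{k+1}, v_{k+1}) - E(q_k, v_k)`. -/
def energyChange (s : NonsmoothNewmarkStep M K C G h γ β) : R :=
  mechanicalEnergy M K s.q₁ s.v₁ - mechanicalEnergy M K s.q₀ s.v₀

/-- The discrete external work `W_ext = (q_{k+1} - q_k)ᵀ F_{k,γ}`. -/
def externalWork (s : NonsmoothNewmarkStep M K C G h γ β) : R :=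
  (s.q₁ - s.q₀) ⬝ᵥ gammaMean γ s.F₀ s.F₁

/-- The discrete damping work `W_damp = -(q_{k+1} - q_k)ᵀ C v_{k,γ}`. -/
def dampingWork (s : NonsmoothNewmarkStep M K C G h γ β) : R :=
  -((s.q₁ - s.q₀) ⬝ᵥ C *ᵥ gammaMean γ s.v₀ s.v₁)

/-- The work `U_{k+1/2}ᵀ P_{k+1}` of the percussion, where `U_{k+1/2}` is the mean of the local
velocities `U = Gᵀ v` at the two ends of the step. -/
def percussionWork (s : NonsmoothNewmarkStep M K C G h γ β) : R :=
  ((1 / 2 : R) • (Gᵀ *ᵥ s.v₀ + Gᵀ *ᵥ s.v₁)) ⬝ᵥ s.P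

variable (s : NonsmoothNewmarkStep M K C G h γ β)

theorem velocity_sub : s.v₁ - s.v₀ = h • gammaMean γ s.a₀ s.a₁ + s.w := by
  rw [s.velocity_update, gammaMean]
  module

theorem gammaMean_balance :
    M *ᵥ gammaMean γ s.a₀ s.a₁ + K *ᵥ gammaMean γ s.q₀ s.q₁ + C *ᵥ gammaMean γ s.v₀ s.v₁ =
      gammaMean γ s.F₀ s.F₁ := by
  simp only [mulVec_gammaMean, ← gammaMean_add, s.balance₀, s.balance₁]

theorem percussionWork_eq_dotProduct_mulVec :
    s.percussionWork = 1 / 2 * ((s.v₀ + s.v₁) ⬝ᵥ M *ᵥ s.w) := by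
  rw [percussionWork, ← mulVec_add, smul_dotProduct, smul_eq_mul, s.impulse, dotProduct_mulVec,
    mulVec_transpose]

variable [NeZero (2 : R)]

theorem displacement_eq_smul_add (hγβ : γ = 2 * β) : s.q₁ - s.q₀ = (h / 2) • (s.v₀ + s.v₁) := by
  subst hγβ
  rw [s.position_update, s.velocity_update]
  ext i
  simp only [Pi.sub_apply, Pi.add_apply, Pi.smul_apply, smul_eq_mul]
  field

theorem kineticEnergy_sub (hγβ : γ = 2 * β) (hM : M.IsSymm) :
    1 / 2 * (s.v₁ ⬝ᵥ M *ᵥ s.v₁) - 1 / 2 * (s.v₀ ⬝ᵥ M *ᵥ s.v₀) =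
      (s.q₁ - s.q₀) ⬝ᵥ M *ᵥ gammaMean γ s.a₀ s.a₁ + s.percussionWork := by
  rw [← mul_sub, dotProduct_mulVec_self_sub_self hM, s.velocity_sub, s.displacement_eq_smul_add hγβ,
    s.percussionWork_eq_dotProduct_mulVec]
  simp only [mulVec_add, mulVec_smul, dotProduct_add, dotProduct_smul, smul_dotProduct,
    smul_eq_mul]
  ring

theorem energy_balance (hγβ : γ = 2 * β) (hM : M.IsSymm) (hK : K.IsSymm) :
    s.energyChange - s.externalWork - s.dampingWork =
      (1 / 2 - γ) * ((s.q₁ - s.q₀) ⬝ᵥ K *ᵥ (s.q₁ - s.q₀)) + s.percussionWork := by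
  have externalWork_eq : s.externalWork =
      (s.q₁ - s.q₀) ⬝ᵥ M *ᵥ gammaMean γ s.a₀ s.a₁
        + (s.q₁ - s.q₀) ⬝ᵥ K *ᵥ gammaMean γ s.q₀ s.q₁ - s.dampingWork := by
    rw [externalWork, dampingWork, ← s.gammaMean_balance, dotProduct_add, dotProduct_add,
      sub_neg_eq_add]
  rw [energyChange, mechanicalEnergy, mechanicalEnergy, externalWork_eq]
  linear_combination s.kineticEnergy_sub hγβ hM
    + half_dotProduct_mulVec_self_sub_self hK γ s.q₀ s.q₁

end Energy

end NonsmoothNewmarkStep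

theorem add_mul_nonpos_of_restitution {R : Type*} [CommRing R] [PartialOrder R]
    [IsOrderedRing R] {u₀ u₁ e p : R} (he : e ≤ 1) (hu : u₀ ≤ 0) (hp : 0 ≤ p)
    (hcompl : (u₁ + e * u₀) * p = 0) : (u₀ + u₁) * p ≤ 0 :=
  calc (u₀ + u₁) * p = (1 - e) * u₀ * p := by linear_combination hcompl
    _ ≤ 0 := mul_nonpos_of_nonpos_of_nonneg
        (mul_nonpos_of_nonneg_of_nonpos (sub_nonneg.2 he) hu) hp

section Dissipation

variable {ι κ R : Type*} [Fintype ι] [Fintype κ] [Field R] [LinearOrder R]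
  [IsStrictOrderedRing R] {M K C : Matrix ι ι R} {G : Matrix ι κ R} {h γ β : R}
  (s : NonsmoothNewmarkStep M K C G h γ β)

theorem NonsmoothNewmarkStep.percussionWork_nonpos (e : κ → R) (I₁ : Set κ)
    (he : ∀ α ∈ I₁, e α ≤ 1) (hP : ∀ α ∉ I₁, s.P α = 0)
    (hcontact : ∀ α ∈ I₁, (Gᵀ *ᵥ s.v₀) α ≤ 0 ∧ 0 ≤ s.P α ∧
      ((Gᵀ *ᵥ s.v₁) α + e α * (Gᵀ *ᵥ s.v₀) α) * s.P α = 0) :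
    s.percussionWork ≤ 0 := by
  rw [percussionWork, smul_dotProduct]
  refine smul_nonpos_of_nonneg_of_nonpos one_half_pos.le (Finset.sum_nonpos fun α _ ↦ ?_)
  by_cases hα : α ∈ I₁
  · obtain ⟨hU, hPα, hcompl⟩ := hcontact α hα
    exact add_mul_nonpos_of_restitution (he α hα) hU hPα hcompl
  · rw [hP α hα, mul_zero]

theorem nonsmooth_newmark_gamma_eq_two_beta_general (hγβ : γ = 2 * β) (hM : M.IsSymm)
    (hK : K.IsSymm) :
    (s.energyChange - s.externalWork - s.dampingWork =
      (1 / 2 - γ) * ((s.q₁ - s.q₀) ⬝ᵥ K *ᵥ (s.q₁ - s.q₀)) + s.percussionWork) ∧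
    (1 / 2 ≤ γ → (∀ x, 0 ≤ x ⬝ᵥ K *ᵥ x) → ∀ (e : κ → R) (I₁ : Set κ),
      (∀ α ∈ I₁, e α ≤ 1) → (∀ α ∉ I₁, s.P α = 0) →
      (∀ α ∈ I₁, (Gᵀ *ᵥ s.v₀) α ≤ 0 ∧ 0 ≤ s.P α ∧
        ((Gᵀ *ᵥ s.v₁) α + e α * (Gᵀ *ᵥ s.v₀) α) * s.P α = 0) →
      s.energyChange ≤ s.externalWork + s.dampingWork) := by
  have hbalance := s.energy_balance hγβ hM hK
  refine ⟨hbalance, fun hγ hK_nonneg e I₁ he hP hcontact ↦ ?_⟩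
  have hstiffness : (1 / 2 - γ) * ((s.q₁ - s.q₀) ⬝ᵥ K *ᵥ (s.q₁ - s.q₀)) ≤ 0 :=
    mul_nonpos_of_nonpos_of_nonneg (sub_nonpos.2 hγ) (hK_nonneg _)
  have hpercussion := s.percussionWork_nonpos e I₁ he hP hcontact
  linarith

end Dissipation

/-- For `γ = 2β`, the nonsmooth Newmark scheme satisfies
`ΔE − W_ext − W_damp = (1/2 − γ)‖Δq‖²_K + U_{k+1/2}ᵀP_{k+1}`; if moreover
`γ ≥ 1/2` and the discrete contact conditions hold, it dissipates the
mechanical energy. -/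
theorem nonsmooth_newmark_gamma_eq_two_beta
    (n m : ℕ) (hn : 1 ≤ n) (hm : 1 ≤ m)
    (h γ β : ℝ) (hh : 0 < h) (hγβ : γ = 2 * β)
    (M K C : Matrix (Fin n) (Fin n) ℝ) (G : Matrix (Fin n) (Fin m) ℝ)
    (hM : M.PosDef) (hK : K.PosSemidef)
    (qk qk1 vk vk1 ak ak1 w Fk Fk1 : Fin n → ℝ) (P : Fin m → ℝ)
    (hbalk : M.mulVec ak + K.mulVec qk + C.mulVec vk = Fk)
    (hbalk1 : M.mulVec ak1 + K.mulVec qk1 + C.mulVec vk1 = Fk1)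
    (hw : M.mulVec w = G.mulVec P)
    (hv : vk1 = vk + (h * (1 - γ)) • ak + (h * γ) • ak1 + w)
    (hq : qk1 = qk + h • vk + (h ^ 2 * (1/2 - β)) • ak + (h ^ 2 * β) • ak1
        + (h / 2) • w) :
    ((1/2 * (vk1 ⬝ᵥ M.mulVec vk1) + 1/2 * (qk1 ⬝ᵥ K.mulVec qk1))
      - (1/2 * (vk ⬝ᵥ M.mulVec vk) + 1/2 * (qk ⬝ᵥ K.mulVec qk))
      - (qk1 - qk) ⬝ᵥ (γ • Fk1 + (1 - γ) • Fk)
      - (-((qk1 - qk) ⬝ᵥ C.mulVec (γ • vk1 + (1 - γ) • vk)))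
    = (1/2 - γ) * ((qk1 - qk) ⬝ᵥ K.mulVec (qk1 - qk))
      + ((1/2 : ℝ) • (Gᵀ.mulVec vk + Gᵀ.mulVec vk1)) ⬝ᵥ P)
    ∧ (1/2 ≤ γ →
      ∀ (e : Fin m → ℝ) (I₁ : Finset (Fin m)),
        (∀ α, 0 ≤ e α ∧ e α ≤ 1) →
        (∀ α ∉ I₁, P α = 0) →
        (∀ α ∈ I₁, Gᵀ.mulVec vk α ≤ 0
          ∧ 0 ≤ Gᵀ.mulVec vk1 α + e α * Gᵀ.mulVec vk α
          ∧ 0 ≤ P α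
          ∧ (Gᵀ.mulVec vk1 α + e α * Gᵀ.mulVec vk α) * P α = 0) →
        (1/2 * (vk1 ⬝ᵥ M.mulVec vk1) + 1/2 * (qk1 ⬝ᵥ K.mulVec qk1))
          - (1/2 * (vk ⬝ᵥ M.mulVec vk) + 1/2 * (qk ⬝ᵥ K.mulVec qk))
        ≤ (qk1 - qk) ⬝ᵥ (γ • Fk1 + (1 - γ) • Fk)
          + (-((qk1 - qk) ⬝ᵥ C.mulVec (γ • vk1 + (1 - γ) • vk)))) := by
  let s : NonsmoothNewmarkStep M K C G h γ β :=
    ⟨qk, qk1, vk, vk1, ak, ak1, w, Fk, Fk1, P, hbalk, hbalk1, hw, hv, hq⟩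
  obtain ⟨hbalance, hdissipation⟩ := nonsmooth_newmark_gamma_eq_two_beta_general s hγβ
    (isHermitian_iff_isSymm.1 hM.isHermitian) (isHermitian_iff_isSymm.1 hK.isHermitian)
  exact ⟨hbalance, fun hγ e I₁ he hP hcontact ↦ hdissipation hγ hK.dotProduct_mulVec_nonneg e I₁
    (fun α _ ↦ (he α).2) hP fun α hα ↦ (hcontact α hα).imp_right And.right⟩
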